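/- Let R ⊂ A be a split Frobenius extension of rings. Then the left Gorenstein global dimensions coincide: G-gldim(A) = G-gldim(R), i.e. the supremum of the Gorenstein projective dimensions of all left A-modules equals the supremum of the Gorenstein projective dimensions of all left R-modules (as elements of ℕ ∪ {∞}). -/

import Mathlib

universe u

section Frobenius

variable {R A : Type u} [Ring R] [Ring A]

/-- A ring extension `ι : R →+* A` (an injective ring homomorphism) is a Frobenius extension
if there is an `R`-`R`-bimodule homomorphism `τ : A → R` together with dual bases
`x i`, `y i` in `A`. -/
def IsFrobeniusExtension (ι : R →+* A) : Prop :=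
  Function.Injective ι ∧
  ∃ (τ : A →+ R) (n : ℕ) (x y : Fin n → A),
    (∀ (r : R) (a : A), τ (ι r * a) = r * τ a) ∧
    (∀ (a : A) (r : R), τ (a * ι r) = τ a * r) ∧
    (∀ a : A, ∑ i, x i * ι (τ (y i * a)) = a) ∧
    (∀ a : A, ∑ i, ι (τ (a * x i)) * y i = a)

/-- A ring extension `ι : R →+* A` is split if `R` is a direct summand of `A` as an
`R`-`R`-bimodule, i.e. there is an `R`-`R`-bimodule homomorphism `π : A → R` with
`π ∘ ι = id`. -/
def IsSplitExtension (ι : R →+* A) : Prop :=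
  ∃ π : A →+ R,
    (∀ (r : R) (a : A), π (ι r * a) = r * π a) ∧
    (∀ (a : A) (r : R), π (a * ι r) = π a * r) ∧
    (∀ r : R, π (ι r) = r)

end Frobenius

/-- A left `R`-module `M` is Gorenstein projective if it is a syzygy of a totally acyclic
complex of projective modules: there is an acyclic complex `⋯ → P₁ → P₀ → P₋₁ → ⋯` of
projective `R`-modules which stays acyclic after applying `Hom_R(-, Q)` for every
projective `R`-module `Q`, with `M ≅ ker (P₀ → P₋₁)`. -/
def IsGorensteinProjective (R : Type u) [Ring R] (M : ModuleCat.{u} R) : Prop :=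
  ∃ (P : ℤ → ModuleCat.{u} R) (f : ∀ i : ℤ, P (i + 1) →ₗ[R] P i),
    (∀ i, Module.Projective R (P i)) ∧
    (∀ i, (f i).comp (f (i + 1)) = 0) ∧
    (∀ i, LinearMap.range (f (i + 1)) = LinearMap.ker (f i)) ∧
    (∀ Q : ModuleCat.{u} R, Module.Projective R Q →
      ∀ (i : ℤ) (g : P (i + 1) →ₗ[R] Q), g.comp (f (i + 1)) = 0 →
        ∃ h : P i →ₗ[R] Q, h.comp (f i) = g) ∧
    Nonempty (↥M ≃ₗ[R] ↥(LinearMap.ker (f (-1))))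

/-- `GPdimLE R n M` means that `M` admits a Gorenstein projective resolution of length `n`,
i.e. an exact sequence `0 → G_n → ⋯ → G₁ → G₀ → M → 0` with all `G_i` Gorenstein
projective. -/
def GPdimLE (R : Type u) [Ring R] : ℕ → ModuleCat.{u} R → Prop
  | 0, M => IsGorensteinProjective R M
  | n + 1, M => ∃ (G : ModuleCat.{u} R) (f : G →ₗ[R] M),
      Function.Surjective f ∧ IsGorensteinProjective R G ∧
      GPdimLE R n (ModuleCat.of R ↥(LinearMap.ker f))

/-- The Gorenstein projective dimension of a left `R`-module, in `ℕ∞`. -/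
noncomputable def GPdim (R : Type u) [Ring R] (M : ModuleCat.{u} R) : ℕ∞ :=
  sInf {k : ℕ∞ | ∃ n : ℕ, k = (n : ℕ∞) ∧ GPdimLE R n M}

/-- The (left) Gorenstein global dimension of a ring: the supremum of the Gorenstein
projective dimensions of all left modules. -/
noncomputable def GGldim (Λ : Type u) [Ring Λ] : ℕ∞ :=
  ⨆ M : ModuleCat.{u} Λ, GPdim Λ M

open CategoryTheory Abelian

namespace GorAux

variable {R : Type u} [Ring R]

lemma mkSE {X Y Z : ModuleCat.{u} R} (i : X →ₗ[R] Y) (p : Y →ₗ[R] Z)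
    (hi : Function.Injective i) (hp : Function.Surjective p) (h : Function.Exact i p) :
    (ShortComplex.mk (ModuleCat.ofHom i) (ModuleCat.ofHom p)
      (by ext x; exact h.apply_apply_eq_zero x)).ShortExact := by
  refine ShortComplex.ShortExact.mk' ?_ ?_ ?_
  · rw [ShortComplex.ShortExact.moduleCat_exact_iff_function_exact]; exact h
  · exact (ModuleCat.mono_iff_injective _).2 hi
  · exact (ModuleCat.epi_iff_surjective _).2 hp

def Perp (n : ℕ) (X : ModuleCat.{u} R) : Prop :=
  ∀ Q : ModuleCat.{u} R, Module.Projective R Q → ∀ i, n < i → ∀ e : Ext.{u} X Q i, e = 0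

lemma perp_of_proj (X : ModuleCat.{u} R) (h : Module.Projective R X) (n : ℕ) : Perp n X := by
  intro Q _ i hi e
  have : Projective X := (IsProjective.iff_projective X).1 h
  obtain ⟨j, rfl⟩ : ∃ j, i = j + 1 := ⟨i - 1, by omega⟩
  exact e.eq_zero_of_projective

variable {X Y Z : ModuleCat.{u} R} {i : X →ₗ[R] Y} {p : Y →ₗ[R] Z}

lemma Perp.left {n : ℕ} (hi : Function.Injective i) (hp : Function.Surjective p)
    (h : Function.Exact i p) (hY : Perp n Y) (hZ : Perp (n + 1) Z) : Perp n X := by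
  intro Q hQ k hk x
  obtain ⟨y, rfl⟩ := Ext.contravariant_sequence_exact₁ (mkSE i p hi hp h) Q x
    (n₁ := 1 + k) rfl (hZ Q hQ _ (by omega) _)
  rw [hY Q hQ k hk y, Ext.comp_zero]

lemma Perp.right {n : ℕ} (hi : Function.Injective i) (hp : Function.Surjective p)
    (h : Function.Exact i p) (hY : Perp (n + 1) Y) (hX : Perp n X) : Perp (n + 1) Z := by
  intro Q hQ k hk z
  obtain ⟨j, rfl⟩ : ∃ j, k = 1 + j := ⟨k - 1, by omega⟩
  obtain ⟨x, rfl⟩ := Ext.contravariant_sequence_exact₃ (mkSE i p hi hp h) Q z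
    (hY Q hQ _ hk _) (n₀ := j) rfl
  rw [hX Q hQ j (by omega) x, Ext.comp_zero]

lemma Perp.mid {n : ℕ} (hi : Function.Injective i) (hp : Function.Surjective p)
    (h : Function.Exact i p) (hX : Perp n X) (hZ : Perp n Z) : Perp n Y := by
  intro Q hQ k hk y
  obtain ⟨z, rfl⟩ := Ext.contravariant_sequence_exact₂ (mkSE i p hi hp h) Q y
    (hX Q hQ _ hk _)
  rw [hZ Q hQ k hk z, Ext.comp_zero]

lemma Perp.extend (hi : Function.Injective i) (hp : Function.Surjective p)
    (h : Function.Exact i p) (hZ : Perp 0 Z) (Q : ModuleCat.{u} R) (hQ : Module.Projective R Q)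
    (g : X →ₗ[R] Q) : ∃ g' : Y →ₗ[R] Q, g'.comp i = g := by
  obtain ⟨y, hy⟩ := Ext.contravariant_sequence_exact₁ (mkSE i p hi hp h) Q
    (Ext.mk₀ (ModuleCat.ofHom g)) (n₁ := 1) rfl (hZ Q hQ _ (by omega) _)
  obtain ⟨y, rfl⟩ := Ext.homEquiv₀.symm.surjective y
  refine ⟨y.hom, ?_⟩
  simp only [Ext.homEquiv₀_symm_apply, Ext.mk₀_comp_mk₀] at hy
  have := Ext.homEquiv₀.symm.injective hy
  have := congrArg ModuleCat.Hom.hom this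
  simpa using this

lemma Perp.of_extend (hi : Function.Injective i) (hp : Function.Surjective p)
    (h : Function.Exact i p) (hY : Module.Projective R Y) (Q : ModuleCat.{u} R)
    (hQ : Module.Projective R Q)
    (H : ∀ g : X →ₗ[R] Q, ∃ g' : Y →ₗ[R] Q, g'.comp i = g) (z : Ext.{u} Z Q 1) : z = 0 := by
  obtain ⟨x, rfl⟩ := Ext.contravariant_sequence_exact₃ (mkSE i p hi hp h) Q z
    (perp_of_proj Y hY 0 Q hQ _ (by omega) _) (n₀ := 0) rfl
  obtain ⟨x, rfl⟩ := Ext.homEquiv₀.symm.surjective x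
  obtain ⟨g', hg'⟩ := H x.hom
  have : x = ModuleCat.ofHom i ≫ ModuleCat.ofHom g' := by
    ext a; exact (LinearMap.congr_fun hg' a).symm
  rw [this]
  simp only [Ext.homEquiv₀_symm_apply, ← Ext.mk₀_comp_mk₀]
  exact (mkSE i p hi hp h).extClass_comp_assoc (Ext.mk₀ (ModuleCat.ofHom g'))

lemma factor_surj {A B Q : Type u} [AddCommGroup A] [AddCommGroup B] [AddCommGroup Q]
    [Module R A] [Module R B] [Module R Q] (q : A →ₗ[R] B) (hq : Function.Surjective q)
    (g : A →ₗ[R] Q) (h : ∀ a, q a = 0 → g a = 0) : ∃ g' : B →ₗ[R] Q, g'.comp q = g := by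
  refine ⟨((LinearMap.ker q).liftQ g (fun a ha => h a ha)).comp
    (q.quotKerEquivOfSurjective hq).symm.toLinearMap, ?_⟩
  ext a
  have : (q.quotKerEquivOfSurjective hq).symm (q a) = (LinearMap.ker q).mkQ a := by
    rw [LinearEquiv.symm_apply_eq]; rfl
  simp only [LinearMap.comp_apply, LinearEquiv.coe_coe, this]
  exact Submodule.liftQ_apply _ _ _

/-- `X` embeds in a projective module with cokernel `X'`. -/
def Step (X X' : ModuleCat.{u} R) : Prop :=
  ∃ (P : ModuleCat.{u} R) (i : X →ₗ[R] P) (p : P →ₗ[R] X'), Module.Projective R P ∧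
    Function.Injective i ∧ Function.Surjective p ∧ Function.Exact i p

def GP (M : ModuleCat.{u} R) : Prop :=
  ∃ T : ModuleCat.{u} R → Prop, T M ∧ ∀ X, T X → Perp 0 X ∧ ∃ X', T X' ∧ Step X X'

lemma GP.perp {M : ModuleCat.{u} R} (h : GP M) : Perp 0 M := by
  obtain ⟨T, hM, H⟩ := h; exact (H M hM).1

lemma GP.step {M : ModuleCat.{u} R} (h : GP M) : ∃ M', GP M' ∧ Step M M' := by
  obtain ⟨T, hM, H⟩ := h
  obtain ⟨M', h1, h2⟩ := (H M hM).2
  exact ⟨M', ⟨T, h1, H⟩, h2⟩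

lemma Perp.iso {n : ℕ} {M N : ModuleCat.{u} R} (e : M ≃ₗ[R] N) (h : Perp n N) : Perp n M := by
  refine Perp.mid (X := ModuleCat.of R PUnit.{u+1}) (Z := N) (i := 0) (p := e.toLinearMap)
    (fun _ _ _ => rfl) e.surjective ?_ (perp_of_proj _ ?_ n) h
  · intro y
    constructor
    · intro h
      exact ⟨0, by rw [LinearMap.zero_apply]; exact ((map_eq_zero_iff e e.injective).1 h).symm⟩
    · rintro ⟨z, rfl⟩
      simp
  · change Module.Projective R PUnit.{u+1}
    infer_instance

lemma exists_proj (M : ModuleCat.{u} R) : ∃ (P : ModuleCat.{u} R) (p : P →ₗ[R] M),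
    Module.Projective R P ∧ Function.Surjective p :=
  ⟨ModuleCat.of R (M →₀ R), Finsupp.linearCombination R id,
    inferInstanceAs (Module.Projective R (M →₀ R)), Finsupp.linearCombination_id_surjective R M⟩

lemma exists_zseq {α : Type*} (r : α → α → Prop) (A B : α → Prop)
    (hA : ∀ x, A x → ∃ y, A y ∧ r x y) (hB : ∀ x, B x → ∃ y, B y ∧ r y x) (x : α)
    (hxA : A x) (hxB : B x) :
    ∃ s : ℤ → α, s 0 = x ∧ (∀ i, A (s i) ∨ B (s i)) ∧ ∀ i, r (s i) (s (i - 1)) := by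
  choose! a ha1 ha2 using hA
  choose! b hb1 hb2 using hB
  have hA' : ∀ n, A (a^[n] x) := fun n => by
    induction n with
    | zero => exact hxA
    | succ n ih => rw [Function.iterate_succ_apply']; exact ha1 _ ih
  have hB' : ∀ n, B (b^[n] x) := fun n => by
    induction n with
    | zero => exact hxB
    | succ n ih => rw [Function.iterate_succ_apply']; exact hb1 _ ih
  refine ⟨fun i => match i with
    | Int.ofNat n => b^[n] x
    | Int.negSucc n => a^[n+1] x, rfl, ?_, ?_⟩
  · rintro (n | n)
    · exact Or.inr (hB' n)
    · exact Or.inl (hA' (n+1))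
  · rintro (n | n)
    · cases n with
      | zero => exact ha2 _ hxA
      | succ n =>
        have : Int.ofNat (n+1) - 1 = Int.ofNat n := by simp
        rw [this]
        change r (b^[n+1] x) (b^[n] x)
        rw [Function.iterate_succ_apply']
        exact hb2 _ (hB' n)
    · have : Int.negSucc n - 1 = Int.negSucc (n+1) := by omega
      rw [this]
      change r (a^[n+1] x) (a^[n+1+1] x)
      rw [Function.iterate_succ_apply' a (n+1)]
      exact ha2 _ (hA' (n+1))

theorem GP.isGP {M : ModuleCat.{u} R} (h : GP M) : IsGorensteinProjective R M := by
  have hB : ∀ X : ModuleCat.{u} R, Perp 0 X → ∃ Y, Perp 0 Y ∧ Step Y X := by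
    intro X hX
    obtain ⟨P, p, hP, hp⟩ := exists_proj X
    refine ⟨ModuleCat.of R (LinearMap.ker p), ?_, P, (LinearMap.ker p).subtype, p, hP,
      Subtype.val_injective, hp, p.exact_subtype_ker_map⟩
    exact Perp.left (X := ModuleCat.of R (LinearMap.ker p)) (i := (LinearMap.ker p).subtype)
      Subtype.val_injective hp p.exact_subtype_ker_map
      (perp_of_proj P hP 0) (fun Q hQ i hi e => hX Q hQ i (by omega) e)
  obtain ⟨s, hs0, hs1, hs2⟩ := exists_zseq Step GP (Perp 0) (fun X hX => hX.step) hB M h h.perp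
  have hperp : ∀ i, Perp 0 (s i) := fun i => (hs1 i).elim (fun h => h.perp) id
  have key : ∀ i, ∃ (P : ModuleCat.{u} R) (j : s i →ₗ[R] P), Module.Projective R P ∧
      Function.Injective j ∧ (∀ Q : ModuleCat.{u} R, Module.Projective R Q →
        ∀ g : s i →ₗ[R] Q, ∃ g' : P →ₗ[R] Q, g'.comp j = g) ∧
      ∃ p : P →ₗ[R] s (i - 1), Function.Surjective p ∧ Function.Exact j p := by
    intro i
    obtain ⟨P, j, p, hP, hj, hp, he⟩ := hs2 i
    exact ⟨P, j, hP, hj, Perp.extend hj hp he (hperp _), p, hp, he⟩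
  choose P j hP hj hext hpp using key
  have key2 : ∀ i, ∃ p : P (i+1) →ₗ[R] s i, Function.Surjective p ∧
      Function.Exact (j (i+1)) p := by
    intro i
    have := hpp (i+1)
    rwa [add_sub_cancel_right] at this
  choose p hp he using key2
  have hker : ∀ i x, (j i) (p i x) = 0 ↔ ∃ y, j (i+1) y = x := by
    intro i x
    rw [map_eq_zero_iff _ (hj i)]
    exact he i x
  refine ⟨P, fun i => (j i).comp (p i), hP, ?_, ?_, ?_, ?_⟩
  · intro i
    ext x
    exact (hker _ _).2 ⟨_, rfl⟩
  · intro i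
    ext x
    simp only [LinearMap.mem_range, LinearMap.mem_ker, LinearMap.comp_apply]
    rw [hker]
    constructor
    · rintro ⟨y, rfl⟩; exact ⟨_, rfl⟩
    · rintro ⟨y, rfl⟩
      obtain ⟨z, rfl⟩ := hp _ y
      exact ⟨z, rfl⟩
  · intro Q hQ i g hg
    obtain ⟨g', hg'⟩ := factor_surj (p i) (hp i) g (by
      intro a ha
      obtain ⟨y, rfl⟩ := (he i a).1 ha
      obtain ⟨z, rfl⟩ := hp _ y
      exact LinearMap.congr_fun hg z)
    obtain ⟨k, hk⟩ := hext i Q hQ g'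
    refine ⟨k, ?_⟩
    rw [← LinearMap.comp_assoc, hk, hg']
  · subst hs0
    have h0 : LinearMap.ker ((j (-1)).comp (p (-1))) = LinearMap.range (j 0) := by
      ext x
      exact hker (-1) x
    rw [h0]
    exact ⟨LinearEquiv.ofInjective (j 0) (hj 0)⟩

theorem GP.of_isGP {M : ModuleCat.{u} R} (h : IsGorensteinProjective R M) : GP M := by
  obtain ⟨P, f, hP, hf, hex, hac, ⟨e⟩⟩ := h
  let N : ℤ → ModuleCat.{u} R := fun i => ModuleCat.of R (LinearMap.ker (f i))
  let ii : ∀ i, N i →ₗ[R] P (i+1) := fun i => (LinearMap.ker (f i)).subtype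
  let pp : ∀ i, P (i+1+1) →ₗ[R] N i := fun i => (f (i+1)).codRestrict (LinearMap.ker (f i))
    (fun c => LinearMap.congr_fun (hf i) c)
  have hii : ∀ i, Function.Injective (ii i) := fun i => Subtype.val_injective
  have hpp : ∀ i, Function.Surjective (pp i) := by
    rintro i ⟨x, hx⟩
    rw [← hex i] at hx
    obtain ⟨y, rfl⟩ := hx
    exact ⟨y, rfl⟩
  have hee : ∀ i, Function.Exact (ii (i+1)) (pp i) := by
    intro i x
    constructor
    · intro h
      have h' : f (i+1) x = 0 := congrArg Subtype.val h
      exact ⟨⟨x, h'⟩, rfl⟩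
    · rintro ⟨y, rfl⟩
      exact Subtype.ext y.2
  have hE1 : ∀ i (Q : ModuleCat.{u} R), Module.Projective R Q → ∀ g : N (i+1) →ₗ[R] Q,
      ∃ g' : P (i+1+1) →ₗ[R] Q, g'.comp (ii (i+1)) = g := by
    intro i Q hQ g
    obtain ⟨k, hk⟩ := hac Q hQ (i+1+1) (g.comp (pp (i+1))) (by
      ext x
      have : pp (i+1) (f (i+1+1+1) x) = 0 := Subtype.ext (LinearMap.congr_fun (hf (i+1+1)) x)
      simp [this])
    refine ⟨k, ?_⟩
    ext x
    obtain ⟨y, rfl⟩ := hpp (i+1) x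
    exact LinearMap.congr_fun hk y
  have hperp : ∀ n i (Q : ModuleCat.{u} R), Module.Projective R Q →
      ∀ e : Ext.{u} (N i) Q (n+1), e = 0 := by
    intro n
    induction n with
    | zero => 
      intro i Q hQ e
      exact Perp.of_extend (hii _) (hpp _) (hee i) (hP _) Q hQ (hE1 i Q hQ) e
    | succ n ih =>
      intro i Q hQ z
      obtain ⟨x, rfl⟩ := Ext.contravariant_sequence_exact₃
        (mkSE _ _ (hii _) (hpp _) (hee i)) Q z
        (perp_of_proj _ (hP _) 0 Q hQ _ (by omega) _) (n₀ := n+1) (by omega)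
      rw [ih (i+1) Q hQ x, Ext.comp_zero]
  refine ⟨fun X => ∃ i, Nonempty (X ≃ₗ[R] N i), ⟨-1, ⟨e⟩⟩, ?_⟩
  rintro X ⟨i, ⟨e⟩⟩
  refine ⟨Perp.iso e ?_, ?_⟩
  · intro Q hQ k hk
    obtain ⟨j, rfl⟩ : ∃ j, k = j + 1 := ⟨k - 1, by omega⟩
    exact hperp j i Q hQ
  · obtain ⟨j, rfl⟩ : ∃ j, i = j + 1 := ⟨i - 1, by omega⟩
    refine ⟨N j, ⟨j, ⟨LinearEquiv.refl R _⟩⟩, P (j+1+1), (ii (j+1)).comp e.toLinearMap, pp j,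
      hP _, (hii _).comp e.injective, hpp j, ?_⟩
    intro x
    rw [hee j x]
    constructor
    · rintro ⟨y, rfl⟩
      exact ⟨e.symm y, by simp⟩
    · rintro ⟨y, rfl⟩
      exact ⟨_, rfl⟩

lemma GP.of_proj {M : ModuleCat.{u} R} (h : Module.Projective R M) : GP M := by
  refine ⟨fun X => Module.Projective R X, h, fun X hX => ⟨perp_of_proj X hX 0,
    ModuleCat.of R PUnit.{u+1}, ?_, X, LinearMap.id, 0, hX, Function.injective_id, ?_, ?_⟩⟩
  · change Module.Projective R PUnit.{u+1}
    infer_instance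
  · intro y
    exact ⟨0, rfl⟩
  · intro x
    simp

lemma GP.ext {G' D G'' : ModuleCat.{u} R} {i : G' →ₗ[R] D} {p : D →ₗ[R] G''}
    (hi : Function.Injective i) (hp : Function.Surjective p) (h : Function.Exact i p)
    (h' : GP G') (h'' : GP G'') : GP D := by
  refine ⟨fun D => ∃ (G' G'' : ModuleCat.{u} R) (i : G' →ₗ[R] D) (p : D →ₗ[R] G''),
    Function.Injective i ∧ Function.Surjective p ∧ Function.Exact i p ∧ GP G' ∧ GP G'',
    ⟨G', G'', i, p, hi, hp, h, h', h''⟩, ?_⟩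
  clear hi hp h h' h''
  rintro X ⟨G', G'', i, p, hi, hp, h, h', h''⟩
  refine ⟨Perp.mid hi hp h h'.perp h''.perp, ?_⟩
  obtain ⟨L', hL', P', j', q', hP', hj', hq', he'⟩ := h'.step
  obtain ⟨L'', hL'', P'', j'', q'', hP'', hj'', hq'', he''⟩ := h''.step
  obtain ⟨t, ht⟩ := Perp.extend hi hp h h''.perp P' hP' j'
  have ht' : ∀ x, t (i x) = j' x := fun x => LinearMap.congr_fun ht x
  let φ : X →ₗ[R] P' × P'' := t.prod (j''.comp p)
  have hφ : Function.Injective φ := by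
    rw [injective_iff_map_eq_zero]
    intro x hx
    have h1 : t x = 0 := congrArg Prod.fst hx
    have h2 : j'' (p x) = 0 := congrArg Prod.snd hx
    rw [map_eq_zero_iff _ hj''] at h2
    obtain ⟨y, rfl⟩ := (h x).1 h2
    rw [ht', map_eq_zero_iff _ hj'] at h1
    rw [h1, map_zero]
  let W : ModuleCat.{u} R := ModuleCat.of R ((P' × P'') ⧸ LinearMap.range φ)
  let π : P' × P'' →ₗ[R] W := (LinearMap.range φ).mkQ
  have hπ : Function.Surjective π := Submodule.mkQ_surjective _
  have hπ0 : ∀ x, π x = 0 ↔ ∃ y, φ y = x := fun x => by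
    change (LinearMap.range φ).mkQ x = 0 ↔ _
    simp
  obtain ⟨a, ha⟩ := factor_surj q' hq' (π.comp (LinearMap.inl R P' P'')) (by
    intro x hx
    obtain ⟨y, rfl⟩ := (he' x).1 hx
    refine (hπ0 _).2 ⟨i y, ?_⟩
    have : p (i y) = 0 := h.apply_apply_eq_zero y
    simp [φ, ht', this])
  obtain ⟨b, hb⟩ := factor_surj π hπ (q''.comp (LinearMap.snd R P' P'')) (by
    intro x hx
    obtain ⟨y, rfl⟩ := (hπ0 x).1 hx
    exact he''.apply_apply_eq_zero _)
  have ha' : ∀ x, a (q' x) = π (x, 0) := fun x => LinearMap.congr_fun ha x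
  have hb' : ∀ x, b (π x) = q'' x.2 := fun x => LinearMap.congr_fun hb x
  refine ⟨W, ⟨L', L'', a, b, ?_, ?_, ?_, hL', hL''⟩, ModuleCat.of R (P' × P''), φ, π, ?_, hφ, hπ,
    fun x => hπ0 x⟩
  · rw [injective_iff_map_eq_zero]
    intro x hx
    obtain ⟨x, rfl⟩ := hq' x
    rw [ha', hπ0] at hx
    obtain ⟨y, hy⟩ := hx
    have h1 : t y = x := congrArg Prod.fst hy
    have h2 : j'' (p y) = 0 := congrArg Prod.snd hy
    rw [map_eq_zero_iff _ hj''] at h2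
    obtain ⟨z, rfl⟩ := (h y).1 h2
    rw [← h1, ht']
    exact he'.apply_apply_eq_zero _
  · intro x
    obtain ⟨y, rfl⟩ := hq'' x
    exact ⟨π (0, y), hb' _⟩
  · intro w
    obtain ⟨⟨x, y⟩, rfl⟩ := hπ w
    rw [hb']
    constructor
    · intro hy
      obtain ⟨g, rfl⟩ := (he'' y).1 hy
      obtain ⟨d, rfl⟩ := hp g
      refine ⟨q' (x - t d), ?_⟩
      rw [ha', ← sub_eq_zero, ← map_sub, hπ0]
      refine ⟨-d, ?_⟩
      simp [φ]
    · rintro ⟨z, hz⟩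
      obtain ⟨z, rfl⟩ := hq' z
      rw [ha'] at hz
      have := congrArg b hz
      rw [hb', hb'] at this
      rw [← this, map_zero]
  · change Module.Projective R (P' × P'')
    infer_instance

lemma exists_pushout {K G H G' M : ModuleCat.{u} R} (v : K →ₗ[R] G) (f : G →ₗ[R] M)
    (i : K →ₗ[R] H) (p : H →ₗ[R] G') (hv : Function.Injective v) (hf : Function.Surjective f)
    (hvf : Function.Exact v f) (hi : Function.Injective i) (hp : Function.Surjective p)
    (hip : Function.Exact i p) :
    ∃ (D : ModuleCat.{u} R) (b : G →ₗ[R] D) (q : D →ₗ[R] G') (a : H →ₗ[R] D) (c : D →ₗ[R] M),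
      Function.Injective b ∧ Function.Surjective q ∧ Function.Exact b q ∧
      Function.Injective a ∧ Function.Surjective c ∧ Function.Exact a c := by
  let φ : K →ₗ[R] G × H := v.prod (-i)
  let π : G × H →ₗ[R] (G × H) ⧸ LinearMap.range φ := (LinearMap.range φ).mkQ
  have hπ : Function.Surjective π := Submodule.mkQ_surjective _
  have hπ0 : ∀ x y, π (x, y) = 0 ↔ ∃ k, v k = x ∧ i k = -y := fun x y => by
    change (LinearMap.range φ).mkQ (x, y) = 0 ↔ _
    simp [φ, neg_eq_iff_eq_neg]
  obtain ⟨q, hq⟩ := factor_surj π hπ (p.comp (LinearMap.snd R G H)) (by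
    rintro ⟨x, y⟩ hx
    obtain ⟨k, rfl, h2⟩ := (hπ0 x y).1 hx
    have h3 := hip.apply_apply_eq_zero k
    rw [h2] at h3
    simpa using h3)
  obtain ⟨c, hc⟩ := factor_surj π hπ (f.comp (LinearMap.fst R G H)) (by
    rintro ⟨x, y⟩ hx
    obtain ⟨k, rfl, h2⟩ := (hπ0 x y).1 hx
    exact hvf.apply_apply_eq_zero k)
  have hq' : ∀ x y, q (π (x, y)) = p y := fun x y => LinearMap.congr_fun hq (x, y)
  have hc' : ∀ x y, c (π (x, y)) = f x := fun x y => LinearMap.congr_fun hc (x, y)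
  refine ⟨ModuleCat.of R ((G × H) ⧸ LinearMap.range φ), π.comp (LinearMap.inl R G H), q,
    π.comp (LinearMap.inr R G H), c, ?_, ?_, ?_, ?_, ?_, ?_⟩
  · rw [injective_iff_map_eq_zero]
    intro x hx
    obtain ⟨k, rfl, h2⟩ := (hπ0 x 0).1 hx
    rw [neg_zero, map_eq_zero_iff _ hi] at h2
    rw [h2, map_zero]
  · intro y
    obtain ⟨y, rfl⟩ := hp y
    exact ⟨π (0, y), hq' _ _⟩
  · intro w
    obtain ⟨⟨x, y⟩, rfl⟩ := hπ w
    constructor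
    · intro hw
      rw [hq'] at hw
      obtain ⟨k, rfl⟩ := (hip y).1 hw
      refine ⟨x + v k, ?_⟩
      change π (x + v k, 0) = _
      rw [← sub_eq_zero, ← map_sub]
      exact (hπ0 _ _).2 ⟨k, by simp, by simp⟩
    · rintro ⟨z, hz⟩
      rw [← hz]
      change q (π (z, 0)) = 0
      rw [hq', map_zero]
  · rw [injective_iff_map_eq_zero]
    intro x hx
    obtain ⟨k, h1, h2⟩ := (hπ0 0 x).1 hx
    rw [map_eq_zero_iff _ hv] at h1
    rw [h1, map_zero] at h2
    simpa using h2.symm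
  · intro y
    obtain ⟨y, rfl⟩ := hf y
    exact ⟨π (y, 0), hc' _ _⟩
  · intro w
    obtain ⟨⟨x, y⟩, rfl⟩ := hπ w
    constructor
    · intro hw
      rw [hc'] at hw
      obtain ⟨k, rfl⟩ := (hvf x).1 hw
      refine ⟨y + i k, ?_⟩
      change π (0, y + i k) = _
      rw [← sub_eq_zero, ← map_sub]
      exact (hπ0 _ _).2 ⟨-k, by simp, by simp⟩
    · rintro ⟨z, hz⟩
      rw [← hz]
      change c (π (0, z)) = 0
      rw [hc', map_zero]

lemma exists_quot {H D M P L : ModuleCat.{u} R} (a : H →ₗ[R] D) (c : D →ₗ[R] M)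
    (d : D →ₗ[R] P) (q : P →ₗ[R] L) 
    (ha : Function.Injective a) (hc : Function.Surjective c) (hac : Function.Exact a c)
    (hd : Function.Injective d) (hq : Function.Surjective q) (hdq : Function.Exact d q) :
    ∃ (E : ModuleCat.{u} R) (π : P →ₗ[R] E) (i : M →ₗ[R] E) (p : E →ₗ[R] L),
      Function.Injective (d.comp a) ∧ Function.Surjective π ∧ Function.Exact (d.comp a) π ∧
      Function.Injective i ∧ Function.Surjective p ∧ Function.Exact i p := by
  let φ : H →ₗ[R] P := d.comp a
  let π : P →ₗ[R] P ⧸ LinearMap.range φ := (LinearMap.range φ).mkQ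
  have hπ : Function.Surjective π := Submodule.mkQ_surjective _
  have hπ0 : ∀ x, π x = 0 ↔ ∃ k, d (a k) = x := fun x => by
    change (LinearMap.range φ).mkQ x = 0 ↔ _
    simp [φ]
  obtain ⟨i, hi⟩ := factor_surj c hc (π.comp d) (by
    intro x hx
    obtain ⟨y, rfl⟩ := (hac x).1 hx
    exact (hπ0 _).2 ⟨y, rfl⟩)
  obtain ⟨p, hp⟩ := factor_surj π hπ q (by
    intro x hx
    obtain ⟨y, rfl⟩ := (hπ0 x).1 hx
    exact hdq.apply_apply_eq_zero _)
  have hi' : ∀ x, i (c x) = π (d x) := fun x => LinearMap.congr_fun hi x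
  have hp' : ∀ x, p (π x) = q x := fun x => LinearMap.congr_fun hp x
  refine ⟨ModuleCat.of R (P ⧸ LinearMap.range φ), π, i, p, hd.comp ha, hπ, fun x => hπ0 x,
    ?_, ?_, ?_⟩
  · rw [injective_iff_map_eq_zero]
    intro x hx
    obtain ⟨x, rfl⟩ := hc x
    rw [hi', hπ0] at hx
    obtain ⟨k, hk⟩ := hx
    rw [← hd hk]
    exact hac.apply_apply_eq_zero _
  · intro y
    obtain ⟨y, rfl⟩ := hq y
    exact ⟨π y, hp' _⟩
  · intro w
    obtain ⟨x, rfl⟩ := hπ w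
    rw [hp']
    constructor
    · intro hw
      obtain ⟨y, rfl⟩ := (hdq x).1 hw
      exact ⟨c y, hi' y⟩
    · rintro ⟨z, hz⟩
      obtain ⟨z, rfl⟩ := hc z
      rw [hi'] at hz
      rw [← hp', ← hz, hp']
      exact hdq.apply_apply_eq_zero _

lemma embed_of_GPdimLE (m : ℕ) : ∀ M : ModuleCat.{u} R, GPdimLE R m M →
    ∃ (H G : ModuleCat.{u} R) (i : M →ₗ[R] H) (p : H →ₗ[R] G),
      Function.Injective i ∧ Function.Surjective p ∧ Function.Exact i p ∧
      HasProjectiveDimensionLT H (m + 1) ∧ GP G := by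
  induction m with
  | zero =>
    intro M hM
    obtain ⟨G, hG, P, i, p, hP, hi, hp, he⟩ := (GP.of_isGP hM).step
    refine ⟨P, G, i, p, hi, hp, he, ?_, hG⟩
    have : Projective P := (IsProjective.iff_projective P).1 hP
    infer_instance
  | succ m ih =>
    rintro M ⟨G0, f, hf, hG0, hK⟩
    obtain ⟨H', G', i, p, hi, hp, he, hH', hG'⟩ := ih _ hK
    obtain ⟨D, b, q, a, c, hb, hq, hbq, ha, hc, hac⟩ := exists_pushout
      (K := ModuleCat.of R (LinearMap.ker f)) (LinearMap.ker f).subtype f i p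
      Subtype.val_injective hf f.exact_subtype_ker_map hi hp he
    have hD : GP D := GP.ext hb hq hbq (GP.of_isGP hG0) hG'
    obtain ⟨L, hL, P, d, r, hP, hd, hr, hdr⟩ := hD.step
    obtain ⟨E, π, j, s, h1, h2, h3, h4, h5, h6⟩ := exists_quot a c d r ha hc hac hd hr hdr
    have : Projective P := (IsProjective.iff_projective P).1 hP
    refine ⟨E, L, j, s, h4, h5, h6, ?_, hL⟩
    refine (mkSE _ _ h1 h2 h3).hasProjectiveDimensionLT_X₃ (m+1) hH' ?_
    change HasProjectiveDimensionLT P (m + 1 + 1)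
    exact hasProjectiveDimensionLT_of_ge P 1 _ (by omega)

lemma perp_of_GPdimLE (m : ℕ) : ∀ M : ModuleCat.{u} R, GPdimLE R m M → Perp m M := by
  induction m with
  | zero => intro M hM; exact (GP.of_isGP hM).perp
  | succ m ih =>
    rintro M ⟨G0, f, hf, hG0, hK⟩
    exact Perp.right (X := ModuleCat.of R (LinearMap.ker f)) (i := (LinearMap.ker f).subtype)
      Subtype.val_injective hf f.exact_subtype_ker_map
      (fun Q hQ k hk e => (GP.of_isGP hG0).perp Q hQ k (by omega) e) (ih _ hK)

def Syz : ℕ → ModuleCat.{u} R → ModuleCat.{u} R → Prop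
  | 0, C, X => X = C
  | n + 1, C, X => ∃ (P : ModuleCat.{u} R) (f : P →ₗ[R] C), Function.Surjective f ∧
      Module.Projective R P ∧ Syz n (ModuleCat.of R (LinearMap.ker f)) X

lemma exists_syz (n : ℕ) : ∀ C : ModuleCat.{u} R, ∃ X, Syz n C X := by
  induction n with
  | zero => exact fun C => ⟨C, rfl⟩
  | succ n ih =>
    intro C
    obtain ⟨P, f, hP, hf⟩ := exists_proj C
    obtain ⟨X, hX⟩ := ih (ModuleCat.of R (LinearMap.ker f))
    exact ⟨X, P, f, hf, hP, hX⟩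

lemma GPdimLE_of_syz (n : ℕ) : ∀ C X : ModuleCat.{u} R, Syz n C X →
    IsGorensteinProjective R X → GPdimLE R n C := by
  induction n with
  | zero => rintro C X rfl h; exact h
  | succ n ih =>
    rintro C X ⟨P, f, hf, hP, hX⟩ h
    exact ⟨P, f, hf, (GP.of_proj hP).isGP, ih _ X hX h⟩

lemma perp_of_syz (n : ℕ) : ∀ C X : ModuleCat.{u} R, Syz n C X → Perp n C → Perp 0 X := by
  induction n with
  | zero => rintro C X rfl h; exact h
  | succ n ih =>
    rintro C X ⟨P, f, hf, hP, hX⟩ h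
    exact ih _ X hX (Perp.left (X := ModuleCat.of R (LinearMap.ker f))
      (i := (LinearMap.ker f).subtype) Subtype.val_injective hf f.exact_subtype_ker_map
      (perp_of_proj P hP n) h)

lemma horseshoe {M I C P P' : ModuleCat.{u} R} (i : M →ₗ[R] I) (p : I →ₗ[R] C)
    (hi : Function.Injective i) (hp : Function.Surjective p) (he : Function.Exact i p)
    (f : P →ₗ[R] M) (hf : Function.Surjective f) (f' : P' →ₗ[R] C) (hf' : Function.Surjective f')
    (hP' : Module.Projective R P') :
    ∃ (φ : P × P' →ₗ[R] I) (a : LinearMap.ker f →ₗ[R] LinearMap.ker φ)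
      (b : LinearMap.ker φ →ₗ[R] LinearMap.ker f'), Function.Surjective φ ∧
      Function.Injective a ∧ Function.Surjective b ∧ Function.Exact a b := by
  obtain ⟨σ, hσ⟩ := Module.projective_lifting_property p f' hp
  have hσ' : ∀ y, p (σ y) = f' y := fun y => LinearMap.congr_fun hσ y
  have hpi : ∀ y, p (i y) = 0 := fun y => he.apply_apply_eq_zero y
  let φ : P × P' →ₗ[R] I := (i.comp f).coprod σ
  have hφ : ∀ x y, φ (x, y) = i (f x) + σ y := fun x y => rfl
  let a : LinearMap.ker f →ₗ[R] LinearMap.ker φ :=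
    ((LinearMap.inl R P P').comp (LinearMap.ker f).subtype).codRestrict _ (by
      rintro ⟨x, hx⟩
      have hx : f x = 0 := hx
      change i (f x) + σ 0 = 0
      simp [hx])
  let b : LinearMap.ker φ →ₗ[R] LinearMap.ker f' :=
    ((LinearMap.snd R P P').comp (LinearMap.ker φ).subtype).codRestrict _ (by
      rintro ⟨⟨x, y⟩, hx⟩
      have hx : i (f x) + σ y = 0 := hx
      have := congrArg p hx
      change f' y = 0
      simpa [hpi, hσ'] using this)
  refine ⟨φ, a, b, ?_, ?_, ?_, ?_⟩
  · intro z
    obtain ⟨y, hy⟩ := hf' (p z)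
    obtain ⟨m, hm⟩ := (he (z - σ y)).1 (by rw [map_sub, hσ', hy, sub_self])
    obtain ⟨x, rfl⟩ := hf m
    exact ⟨(x, y), by rw [hφ, hm]; abel⟩
  · intro x y h
    have : ((x : P), (0 : P')) = ((y : P), (0 : P')) := congrArg Subtype.val h
    exact Subtype.ext (congrArg Prod.fst this)
  · rintro ⟨y, hy⟩
    have hy : f' y = 0 := hy
    obtain ⟨m, hm⟩ := (he (σ y)).1 (by rw [hσ', hy])
    obtain ⟨x, rfl⟩ := hf m
    exact ⟨⟨(-x, y), by change i (f (-x)) + σ y = 0; simp [hm]⟩, rfl⟩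
  · rintro ⟨⟨x, y⟩, hx⟩
    constructor
    · intro h
      have hy : y = 0 := congrArg Subtype.val h
      subst hy
      have hx : i (f x) + σ 0 = 0 := hx
      rw [map_zero, add_zero, map_eq_zero_iff _ hi] at hx
      exact ⟨⟨x, hx⟩, rfl⟩
    · rintro ⟨z, hz⟩
      have : ((z : P), (0 : P')) = (x, y) := congrArg Subtype.val hz
      exact Subtype.ext (congrArg Prod.snd this).symm

lemma syz_step (n : ℕ) : ∀ {M I C X : ModuleCat.{u} R} (i : M →ₗ[R] I) (p : I →ₗ[R] C),
    Function.Injective i → Function.Surjective p → Function.Exact i p →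
    HasProjectiveDimensionLT I (n + 1) → Syz n M X → ∃ X', Syz n C X' ∧ Step X X' := by
  induction n with
  | zero =>
    rintro M I C X i p hi hp he hI rfl
    have hI : HasProjectiveDimensionLT I 1 := hI
    exact ⟨C, rfl, I, i, p, (IsProjective.iff_projective I).2 inferInstance, hi, hp, he⟩
  | succ n ih =>
    rintro M I C X i p hi hp he hI ⟨P, f, hf, hP, hX⟩
    obtain ⟨P', f', hP', hf'⟩ := exists_proj C
    obtain ⟨φ, a, b, hφ, ha, hb, hab⟩ := horseshoe i p hi hp he f hf f' hf' hP'
    have hK : HasProjectiveDimensionLT (ModuleCat.of R (LinearMap.ker φ)) (n + 1) := by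
      have hPP : Module.Projective R (ModuleCat.of R (P × P')) :=
        inferInstanceAs (Module.Projective R (P × P'))
      have : Projective (ModuleCat.of R (P × P')) := (IsProjective.iff_projective _).1 hPP
      refine (mkSE (X := ModuleCat.of R (LinearMap.ker φ)) (Y := ModuleCat.of R (P × P'))
        (LinearMap.ker φ).subtype φ Subtype.val_injective hφ
        φ.exact_subtype_ker_map).hasProjectiveDimensionLT_X₁ (n+1) ?_ hI
      exact hasProjectiveDimensionLT_of_ge (ModuleCat.of R (P × P')) 1 _ (by omega)
    obtain ⟨X', h1, h2⟩ := ih (M := ModuleCat.of R (LinearMap.ker f))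
      (I := ModuleCat.of R (LinearMap.ker φ)) (C := ModuleCat.of R (LinearMap.ker f'))
      a b ha hb hab hK hX
    exact ⟨X', ⟨P', f', hf', hP', h1⟩, h2⟩

variable (R) in
def Spli (n : ℕ) : Prop :=
  ∀ I : ModuleCat.{u} R, Injective I → HasProjectiveDimensionLT I (n + 1)

variable (R) in
def Silp (n : ℕ) : Prop :=
  ∀ Q : ModuleCat.{u} R, Projective Q → HasInjectiveDimensionLT Q (n + 1)

lemma GPdimLE_of_spli_silp {n : ℕ} (h1 : Spli R n) (h2 : Silp R n) (M : ModuleCat.{u} R) :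
    GPdimLE R n M := by
  obtain ⟨X, hX⟩ := exists_syz n M
  refine GPdimLE_of_syz n M X hX (GP.isGP ⟨fun X => ∃ C, Syz n C X, ⟨M, hX⟩, ?_⟩)
  rintro X ⟨C, hC⟩
  constructor
  · refine perp_of_syz n C X hC ?_
    intro Q hQ k hk e
    have := h2 Q ((IsProjective.iff_projective Q).1 hQ)
    exact e.eq_zero_of_hasInjectiveDimensionLT (n+1) hk
  · let I := Injective.under C
    let j : C →ₗ[R] I := (Injective.ι C).hom
    have hj : Function.Injective j := (ModuleCat.mono_iff_injective (Injective.ι C)).1 inferInstance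
    obtain ⟨X', h3, h4⟩ := syz_step n (C := ModuleCat.of R (I ⧸ LinearMap.range j)) j
      (LinearMap.range j).mkQ hj (Submodule.mkQ_surjective _)
      (LinearMap.exact_map_mkQ_range j) (h1 I inferInstance) hC
    exact ⟨X', ⟨_, h3⟩, h4⟩

lemma exists_GPdimLE {n : ℕ} {M : ModuleCat.{u} R} (h : GPdim R M ≤ n) :
    ∃ m ≤ n, GPdimLE R m M := by
  unfold GPdim at h
  have hne : {k : ℕ∞ | ∃ n : ℕ, k = (n : ℕ∞) ∧ GPdimLE R n M}.Nonempty := by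
    by_contra hc
    rw [Set.not_nonempty_iff_eq_empty] at hc
    rw [hc, sInf_empty] at h
    exact absurd h (by simp)
  obtain ⟨m, hm, hM⟩ := csInf_mem hne
  rw [hm] at h
  exact ⟨m, by exact_mod_cast h, hM⟩

theorem GGldim_le_iff (n : ℕ) : GGldim R ≤ n ↔ Spli R n ∧ Silp R n := by
  unfold GGldim
  rw [iSup_le_iff]
  constructor
  · intro H
    constructor
    · intro I hI
      obtain ⟨m, hm, hM⟩ := exists_GPdimLE (H I)
      obtain ⟨E, G, i, p, hi, hp, he, hE, hG⟩ := embed_of_GPdimLE m I hM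
      have : Mono (ModuleCat.ofHom i) := (ModuleCat.mono_iff_injective _).2 hi
      have hr : Retract I E := ⟨ModuleCat.ofHom i, Injective.factorThru (𝟙 I) (ModuleCat.ofHom i),
        Injective.comp_factorThru _ _⟩
      have := hr.hasProjectiveDimensionLT (m+1)
      exact hasProjectiveDimensionLT_of_ge I (m+1) _ (by omega)
    · intro Q hQ
      refine HasInjectiveDimensionLT.mk.{u} fun k hk Y e => ?_
      obtain ⟨m, hm, hM⟩ := exists_GPdimLE (H Y)
      exact perp_of_GPdimLE m Y hM Q ((IsProjective.iff_projective Q).2 hQ) k (by omega) e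
  · rintro ⟨h1, h2⟩ M
    exact sInf_le ⟨n, rfl, GPdimLE_of_spli_silp h1 h2 M⟩

end GorAux

namespace GorAux

section functors

open Limits

variable {C D : Type*} [Category C] [Category D] [Abelian C] [Abelian D]
  (F : C ⥤ D) [F.PreservesZeroMorphisms] [PreservesFiniteLimits F] [PreservesFiniteColimits F]

lemma map_pd [EnoughProjectives C] [F.PreservesProjectiveObjects] (n : ℕ) :
    ∀ X : C, HasProjectiveDimensionLT X (n + 1) → HasProjectiveDimensionLT (F.obj X) (n + 1) := by
  induction n with
  | zero =>
    intro X hX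
    have hX : HasProjectiveDimensionLT X 1 := hX
    have : Projective X := projective_iff_hasProjectiveDimensionLT_one.2 hX
    exact (inferInstance : HasProjectiveDimensionLT (F.obj X) 1)
  | succ n ih =>
    intro X hX
    let S := ShortComplex.mk (kernel.ι (Projective.π X)) (Projective.π X) (kernel.condition _)
    have hS : S.ShortExact := ShortComplex.ShortExact.mk' (ShortComplex.exact_kernel _)
      inferInstance inferInstance
    have hP : Projective S.X₂ := inferInstanceAs (Projective (Projective.over X))
    have h1 := (hS.hasProjectiveDimensionLT_X₃_iff n hP).1 hX
    have hP' : Projective (S.map F).X₂ := F.projective_obj_of_projective hP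
    exact ((hS.map_of_exact F).hasProjectiveDimensionLT_X₃_iff n hP').2 (ih _ h1)

lemma map_id [EnoughInjectives C] [F.PreservesInjectiveObjects] (n : ℕ) :
    ∀ X : C, HasInjectiveDimensionLT X (n + 1) → HasInjectiveDimensionLT (F.obj X) (n + 1) := by
  induction n with
  | zero =>
    intro X hX
    have hX : HasInjectiveDimensionLT X 1 := hX
    have : Injective X := injective_iff_hasInjectiveDimensionLT_one.2 hX
    exact (inferInstance : HasInjectiveDimensionLT (F.obj X) 1)
  | succ n ih =>
    intro X hX
    let S := ShortComplex.mk (Injective.ι X) (cokernel.π (Injective.ι X)) (cokernel.condition _)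
    have hS : S.ShortExact := ShortComplex.ShortExact.mk' (ShortComplex.exact_cokernel _)
      inferInstance inferInstance
    have hP : Injective S.X₂ := inferInstanceAs (Injective (Injective.under X))
    have h1 := (hS.hasInjectiveDimensionLT_X₃_iff n hP).2 hX
    have hP' : Injective (S.map F).X₂ := F.injective_obj_of_injective hP
    exact ((hS.map_of_exact F).hasInjectiveDimensionLT_X₃_iff n hP').1 (ih _ h1)

end functors

variable {R A : Type u} [Ring R] [Ring A] (ι : R →+* A)

noncomputable abbrev Res : ModuleCat.{u} A ⥤ ModuleCat.{u} R := ModuleCat.restrictScalars.{u} ι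
noncomputable abbrev Coind : ModuleCat.{u} R ⥤ ModuleCat.{u} A := ModuleCat.coextendScalars.{u, u, u} ι

/-- Construct an element of the coinduced module. -/
noncomputable def mkC (M : ModuleCat.{u} R) (g : A →+ M) (h : ∀ r a, g (ι r * a) = r • g a) :
    (Coind ι).obj M :=
  (ModuleCat.CoextendScalars.equiv ι M).symm { g with map_smul' := h }

noncomputable def ev {M : ModuleCat.{u} R} (φ : (Coind ι).obj M) (a : A) : M :=
  ModuleCat.CoextendScalars.equiv ι M φ a

lemma ev_mkC (M : ModuleCat.{u} R) (g : A →+ M) (h) (a : A) : ev ι (mkC ι M g h) a = g a := rfl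

lemma evext {M : ModuleCat.{u} R} {φ ψ : (Coind ι).obj M} (h : ∀ a, ev ι φ a = ev ι ψ a) :
    φ = ψ := (ModuleCat.CoextendScalars.equiv ι M).injective (LinearMap.ext h)

lemma ev_add {M : ModuleCat.{u} R} (φ ψ : (Coind ι).obj M) (a : A) :
    ev ι (φ + ψ) a = ev ι φ a + ev ι ψ a := rfl

lemma ev_sum {M : ModuleCat.{u} R} {n : ℕ} (φ : Fin n → (Coind ι).obj M) (a : A) :
    ev ι (∑ i, φ i) a = ∑ i, ev ι (φ i) a :=
  map_sum (⟨⟨fun φ => ev ι φ a, rfl⟩, fun φ ψ => ev_add ι φ ψ a⟩ : (Coind ι).obj M →+ M) φ _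

lemma ev_smul {M : ModuleCat.{u} R} (s : A) (φ : (Coind ι).obj M) (a : A) :
    ev ι (s • φ) a = ev ι φ (a * s) := rfl

lemma ev_map_add {M : ModuleCat.{u} R} (φ : (Coind ι).obj M) (a b : A) :
    ev ι φ (a + b) = ev ι φ a + ev ι φ b :=
  (ModuleCat.CoextendScalars.equiv ι M φ).map_add a b

lemma ev_map_sum {M : ModuleCat.{u} R} (φ : (Coind ι).obj M) {n : ℕ} (f : Fin n → A) :
    ev ι φ (∑ i, f i) = ∑ i, ev ι φ (f i) :=
  map_sum (ModuleCat.CoextendScalars.equiv ι M φ) f _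

lemma ev_map_smul {M : ModuleCat.{u} R} (φ : (Coind ι).obj M) (r : R) (a : A) :
    ev ι φ (ι r * a) = r • ev ι φ a :=
  (ModuleCat.CoextendScalars.equiv ι M φ).map_smul r a

lemma ev_map {M N : ModuleCat.{u} R} (g : M ⟶ N) (φ : (Coind ι).obj M) (a : A) :
    ev ι ((Coind ι).map g φ) a = g (ev ι φ a) := rfl

section bm

variable (t : A →+ R) (hl : ∀ (r : R) (a : A), t (ι r * a) = r * t a)
  (hr : ∀ (a : A) (r : R), t (a * ι r) = t a * r)

noncomputable def bm (M : ModuleCat.{u} R) : M →ₗ[R] (Res ι).obj ((Coind ι).obj M) where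
  toFun m := mkC ι M ⟨⟨fun a => t a • m, by simp⟩, fun a b => by simp [add_smul]⟩
    (fun r a => by
      change t (ι r * a) • m = r • t a • m
      rw [hl, mul_smul])
  map_add' m m' := evext ι fun a => smul_add (t a) m m'
  map_smul' r m := evext ι fun a => by
    change t a • r • m = t (a * ι r) • m
    rw [hr, mul_smul]

lemma ev_bm (M : ModuleCat.{u} R) (m : M) (a : A) :
    ev ι (bm ι t hl hr M m : (Coind ι).obj M) a = t a • m := rfl

end bm

noncomputable def bmHom (t : A →+ R) (hl : ∀ (r : R) (a : A), t (ι r * a) = r * t a)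
    (hr : ∀ (a : A) (r : R), t (a * ι r) = t a * r) (M : ModuleCat.{u} R) :
    M ⟶ (Res ι).obj ((Coind ι).obj M) :=
  ModuleCat.ofHom (Y := (Res ι).obj ((Coind ι).obj M)) (bm ι t hl hr M)

/-- evaluation at one. -/
noncomputable def ev1 (M : ModuleCat.{u} R) : (Res ι).obj ((Coind ι).obj M) →ₗ[R] M where
  toFun (φ : (Coind ι).obj M) := ev ι φ 1
  map_add' φ ψ := rfl
  map_smul' r (φ : (Coind ι).obj M) := by
    change ev ι φ (1 * ι r) = r • ev ι φ 1
    rw [one_mul, ← ev_map_smul, mul_one]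

lemma retract_res_coind (hS : IsSplitExtension ι) (M : ModuleCat.{u} R) :
    Nonempty (Retract M ((Res ι).obj ((Coind ι).obj M))) := by
  obtain ⟨π, hl, hr, h1⟩ := hS
  refine ⟨⟨bmHom ι π hl hr M,
    ModuleCat.ofHom (X := (Res ι).obj ((Coind ι).obj M)) (ev1 ι M), ?_⟩⟩
  ext m
  change π 1 • m = m
  rw [← ι.map_one, h1, one_smul]

section frob

variable (τ : A →+ R) {n : ℕ} (x y : Fin n → A) (hl : ∀ (r : R) (a : A), τ (ι r * a) = r * τ a)
  (hr : ∀ (a : A) (r : R), τ (a * ι r) = τ a * r)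
  (hx : ∀ a : A, ∑ i, x i * ι (τ (y i * a)) = a)
  (hy : ∀ a : A, ∑ i, ι (τ (a * x i)) * y i = a)

noncomputable def evN {N : ModuleCat.{u} A} (φ : (Coind ι).obj ((Res ι).obj N)) (a : A) : N := ev ι φ a

lemma evN_map_smul {N : ModuleCat.{u} A} (φ : (Coind ι).obj ((Res ι).obj N)) (r : R) (a : A) :
    evN ι φ (ι r * a) = ι r • evN ι φ a := ev_map_smul ι φ r a

lemma evN_map_sum {N : ModuleCat.{u} A} (φ : (Coind ι).obj ((Res ι).obj N)) {n : ℕ}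
    (f : Fin n → A) : evN ι φ (∑ i, f i) = ∑ i, evN ι φ (f i) := ev_map_sum ι φ f

include hx hy in
lemma ct_smul {N : ModuleCat.{u} A} (φ : (Coind ι).obj ((Res ι).obj N)) (s : A) :
    ∑ i, x i • evN ι φ (y i * s) = s • ∑ i, x i • evN ι φ (y i) := by
  have h1 : ∀ i, evN ι φ (y i * s) = ∑ k, ι (τ (y i * s * x k)) • evN ι φ (y k) := by
    intro i
    conv_lhs => rw [← hy (y i * s)]
    rw [evN_map_sum]
    simp only [evN_map_smul]
  simp only [h1, Finset.smul_sum, smul_smul]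
  rw [Finset.sum_comm]
  refine Finset.sum_congr rfl fun k _ => ?_
  rw [← Finset.sum_smul]
  congr 1
  conv_rhs => rw [← hx (s * x k)]
  simp only [mul_assoc]

noncomputable def ct (N : ModuleCat.{u} A) : (Coind ι).obj ((Res ι).obj N) →ₗ[A] N where
  toFun φ := ∑ i, x i • evN ι φ (y i)
  map_add' φ ψ := by
    rw [← Finset.sum_add_distrib]
    exact Finset.sum_congr rfl fun i _ => smul_add (x i) (evN ι φ (y i)) (evN ι ψ (y i))
  map_smul' s φ := ct_smul ι τ x y hx hy φ s

include hy in
lemma left_aux (M : ModuleCat.{u} R) (φ : (Coind ι).obj M) (a : A) :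
    ev ι (∑ i, x i • (show (Coind ι).obj M from bm ι τ hl hr M (ev ι φ (y i)))) a = ev ι φ a := by
  rw [ev_sum]
  conv_rhs => rw [← hy a, ev_map_sum]
  refine Finset.sum_congr rfl fun i _ => ?_
  rw [ev_smul, ev_map_smul]
  rfl

include hx in
lemma right_aux (N : ModuleCat.{u} A) (m : N) : ∑ i, x i • ι (τ (y i)) • m = m := by
  have := hx 1
  simp only [mul_one] at this
  simp only [smul_smul, ← Finset.sum_smul, this, one_smul]

noncomputable def frobAdj : Coind ι ⊣ Res ι := Adjunction.mkOfUnitCounit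
  { unit :=
      { app := fun M => bmHom ι τ hl hr M
        naturality := fun M N g => by
          ext m
          refine evext ι fun a => ?_
          change τ a • g.hom m = g.hom (τ a • m)
          rw [map_smul] }
    counit :=
      { app := fun N => ModuleCat.ofHom (ct ι τ x y hx hy N)
        naturality := fun M N g => by
          ext φ
          change ∑ i, x i • g.hom (evN ι φ (y i)) = g.hom (∑ i, x i • evN ι φ (y i))
          simp [map_sum] }
    left_triangle := by
      ext M φ
      refine evext ι fun a => ?_
      exact left_aux ι τ x y hl hr hy M φ a
    right_triangle := by
      ext N m
      exact right_aux ι τ x y hx N m }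

end frob

open Limits in
theorem main_aux (hS : IsSplitExtension ι) (adj : Coind ι ⊣ Res ι) :
    GGldim A = GGldim R := by
  have adj' : Res ι ⊣ Coind ι := ModuleCat.restrictCoextendScalarsAdj.{u, u, u} ι
  have i1 : (Coind ι).IsLeftAdjoint := adj.isLeftAdjoint
  have i2 : (Res ι).IsRightAdjoint := adj.isRightAdjoint
  have i3 : (Res ι).IsLeftAdjoint := adj'.isLeftAdjoint
  have i4 : (Coind ι).IsRightAdjoint := adj'.isRightAdjoint
  have l1 : PreservesFiniteLimits (Res ι) := inferInstance
  have l2 : PreservesFiniteLimits (Coind ι) := inferInstance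
  have l3 : PreservesFiniteColimits (Res ι) := inferInstance
  have l4 : PreservesFiniteColimits (Coind ι) := inferInstance
  have p1 : (Res ι).PreservesProjectiveObjects :=
    Functor.preservesProjectiveObjects_of_adjunction_of_preservesEpimorphisms adj'
  have p2 : (Coind ι).PreservesProjectiveObjects :=
    Functor.preservesProjectiveObjects_of_adjunction_of_preservesEpimorphisms adj
  have p3 : (Res ι).PreservesInjectiveObjects :=
    Functor.preservesInjectiveObjects_of_adjunction_of_preservesMonomorphisms adj
  have p4 : (Coind ι).PreservesInjectiveObjects :=
    Functor.preservesInjectiveObjects_of_adjunction_of_preservesMonomorphisms adj'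
  have key : ∀ n : ℕ, GGldim A ≤ n ↔ GGldim R ≤ n := by
    intro n
    rw [GGldim_le_iff, GGldim_le_iff]
    constructor
    · rintro ⟨h1, h2⟩
      constructor
      · intro I hI
        obtain ⟨r⟩ := retract_res_coind ι hS I
        have := map_pd (Res ι) n _ (h1 ((Coind ι).obj I) inferInstance)
        exact r.hasProjectiveDimensionLT _
      · intro Q hQ
        obtain ⟨r⟩ := retract_res_coind ι hS Q
        have := map_id (Res ι) n _ (h2 ((Coind ι).obj Q) inferInstance)
        exact r.hasInjectiveDimensionLT _
    · rintro ⟨h1, h2⟩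
      constructor
      · intro J hJ
        have hm : Mono (adj'.unit.app J) := inferInstance
        have r : Retract J ((Coind ι).obj ((Res ι).obj J)) :=
          ⟨adj'.unit.app J, Injective.factorThru (𝟙 J) (adj'.unit.app J),
            Injective.comp_factorThru _ _⟩
        have := map_pd (Coind ι) n _ (h1 ((Res ι).obj J) inferInstance)
        exact r.hasProjectiveDimensionLT _
      · intro Q hQ
        have hm : Epi (adj.counit.app Q) := inferInstance
        have r : Retract Q ((Coind ι).obj ((Res ι).obj Q)) :=
          ⟨Projective.factorThru (𝟙 Q) (adj.counit.app Q), adj.counit.app Q,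
            Projective.factorThru_comp _ _⟩
        have := map_id (Coind ι) n _ (h2 ((Res ι).obj Q) inferInstance)
        exact r.hasInjectiveDimensionLT _
  apply le_antisymm
  · induction h : GGldim R with
    | top => exact le_top
    | coe n => exact (key n).2 h.le
  · induction h : GGldim A with
    | top => exact le_top
    | coe n => exact (key n).1 h.le

end GorAux

section Statement

variable {R A : Type u} [Ring R] [Ring A]

theorem stmt10 (ι : R →+* A) (hF : IsFrobeniusExtension ι) (hS : IsSplitExtension ι) :
    GGldim A = GGldim R := by
  obtain ⟨-, τ, n, x, y, hl, hr, hx, hy⟩ := hF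
  exact GorAux.main_aux ι hS (GorAux.frobAdj ι τ x y hl hr hx hy)

end Statement
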